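/- arXiv:2409.08218 — 2 statements merged into one kernel-verified Lean document; each statement's English description precedes it below -/
import Mathlib

section
/- There exists a function G : ℝ² → ℝ which is infinitely differentiable (of class C^∞), has compact support, is not identically zero, satisfies G(x) ≥ 0 for all x ∈ ℝ², and satisfies G(x) + ΔG(x) ≥ 0 for all x ∈ ℝ², where ΔG denotes the Laplacian ΔG = ∂²G/∂x₁² + ∂²G/∂x₂². -/
/-!
If `f, g ≥ 0` satisfy `f'' + a f ≥ 0` and `g'' + b g ≥ 0` on the line, then `G (x, y) = f x * g y`
satisfies `ΔG + (a + b) G ≥ 0` on the plane, so it suffices to find, for `c = 1 / 2`, a bump `f` on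
the line with `f'' + c f ≥ 0`. Replacing `f x` by `f (r x)` multiplies `c` by `r²`, so any one value
of `c` will do. The bump `f x = exp (-1 / (1 - x²))` on `(-1, 1)` has `c = 9`: with
`w = 1 / (1 - x²)` one finds
`f'' + 9 f = (4 w⁴ - 12 w³ + 6 w² + 9) f = ((2 w² - 3 w - 3 / 2)² + 3 (w - 3 / 2)²) f ≥ 0`.
-/

section ExpNegInvGlue

open Polynomial

lemma deriv_expNegInvGlue :
    deriv expNegInvGlue = fun v => v⁻¹ ^ 2 * expNegInvGlue v := by
  funext v
  simpa using (expNegInvGlue.hasDerivAt_polynomial_eval_inv_mul 1 v).deriv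

lemma iteratedDeriv_two_expNegInvGlue (v : ℝ) :
    iteratedDeriv 2 expNegInvGlue v = (v⁻¹ ^ 4 - 2 * v⁻¹ ^ 3) * expNegInvGlue v := by
  have hderiv := (expNegInvGlue.hasDerivAt_polynomial_eval_inv_mul (X ^ 2) v).deriv
  simp only [eval_pow, eval_X, eval_mul, eval_sub, derivative_X_pow, eval_C] at hderiv
  rw [iteratedDeriv_succ, iteratedDeriv_one, deriv_expNegInvGlue, hderiv]
  push_cast
  ring

end ExpNegInvGlue

/-- The standard smooth bump on the line, equal to `exp (-1 / (1 - x²))` on `(-1, 1)` and to zero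
elsewhere. -/
noncomputable def unitBump (x : ℝ) : ℝ := expNegInvGlue (1 - x ^ 2)

lemma unitBump_nonneg (x : ℝ) : 0 ≤ unitBump x := expNegInvGlue.nonneg _

lemma unitBump_zero_pos : 0 < unitBump 0 := expNegInvGlue.pos_of_pos (by norm_num)

lemma contDiff_unitBump {n : ℕ∞} : ContDiff ℝ n unitBump :=
  expNegInvGlue.contDiff.comp (by fun_prop)

lemma unitBump_eq_zero_iff {x : ℝ} : unitBump x = 0 ↔ 1 ≤ |x| := by
  rw [unitBump, expNegInvGlue.zero_iff_nonpos, sub_nonpos, one_le_sq_iff_one_le_abs]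

lemma hasCompactSupport_unitBump : HasCompactSupport unitBump := by
  refine HasCompactSupport.intro (isCompact_closedBall 0 1) fun x hx => ?_
  rw [mem_closedBall_zero_iff, Real.norm_eq_abs, not_le] at hx
  exact unitBump_eq_zero_iff.2 hx.le

lemma iteratedDeriv_two_unitBump (x : ℝ) :
    iteratedDeriv 2 unitBump x =
      (4 * (1 - x ^ 2)⁻¹ ^ 4 - 12 * (1 - x ^ 2)⁻¹ ^ 3 + 6 * (1 - x ^ 2)⁻¹ ^ 2) * unitBump x := by
  have hφ : deriv (fun y : ℝ => 1 - y ^ 2) = fun y => -(2 * y) := by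
    funext y
    simp
  have hφ₂ : iteratedDeriv 2 (fun y : ℝ => 1 - y ^ 2) x = -2 := by
    rw [iteratedDeriv_succ, iteratedDeriv_one, hφ]
    simp
  have hchain : iteratedDeriv 2 unitBump x =
      ((1 - x ^ 2)⁻¹ ^ 4 - 2 * (1 - x ^ 2)⁻¹ ^ 3) * unitBump x * (-(2 * x)) ^ 2 +
        (1 - x ^ 2)⁻¹ ^ 2 * unitBump x * -2 := by
    have h := iteratedDeriv_comp_two (x := x) (f := fun y : ℝ => 1 - y ^ 2)
      (expNegInvGlue.contDiff (n := 2)).contDiffAt (by fun_prop)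
    rwa [iteratedDeriv_two_expNegInvGlue, deriv_expNegInvGlue, hφ, hφ₂] at h
  rw [hchain]
  rcases eq_or_ne (1 - x ^ 2) 0 with hx | hx
  · simp [hx]
  · field_simp
    ring

lemma iteratedDeriv_two_unitBump_add_nine_mul_nonneg (x : ℝ) :
    0 ≤ iteratedDeriv 2 unitBump x + 9 * unitBump x := by
  set w := (1 - x ^ 2)⁻¹ with hw
  have hsos : iteratedDeriv 2 unitBump x + 9 * unitBump x =
      ((2 * w ^ 2 - 3 * w - 3 / 2) ^ 2 + 3 * (w - 3 / 2) ^ 2) * unitBump x := by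
    rw [iteratedDeriv_two_unitBump, ← hw]
    ring
  rw [hsos]
  exact mul_nonneg (by positivity) (unitBump_nonneg x)

lemma exists_contDiff_hasCompactSupport_iteratedDeriv_two_add_mul_nonneg {c : ℝ} (hc : 0 < c) :
    ∃ f : ℝ → ℝ, ContDiff ℝ (⊤ : ℕ∞) f ∧ HasCompactSupport f ∧ f ≠ 0 ∧ (∀ x, 0 ≤ f x) ∧
      ∀ x, 0 ≤ iteratedDeriv 2 f x + c * f x := by
  obtain ⟨r, hr, hrc⟩ : ∃ r : ℝ, r ≠ 0 ∧ r ^ 2 * 9 = c :=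
    ⟨√(c / 9), by positivity, by rw [Real.sq_sqrt (by positivity)]; ring⟩
  refine ⟨fun x => unitBump (r * x), contDiff_unitBump.comp (by fun_prop),
    hasCompactSupport_unitBump.comp_homeomorph (Homeomorph.mulLeft₀ r hr), fun h => ?_,
    fun x => unitBump_nonneg _, fun x => ?_⟩
  · have h0 : unitBump (r * 0) = 0 := congrFun h 0
    rw [mul_zero] at h0
    exact unitBump_zero_pos.ne' h0
  · rw [iteratedDeriv_comp_const_mul (contDiff_unitBump (n := 2)), ← hrc, mul_assoc, ← mul_add]
    exact mul_nonneg (sq_nonneg r) (iteratedDeriv_two_unitBump_add_nine_mul_nonneg _)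

lemma hasCompactSupport_fst_mul_snd {X Y R : Type*} [TopologicalSpace X] [TopologicalSpace Y]
    [MulZeroClass R] {f : X → R} {g : Y → R} (hf : HasCompactSupport f)
    (hg : HasCompactSupport g) : HasCompactSupport fun p : X × Y => f p.1 * g p.2 := by
  refine HasCompactSupport.intro' (hf.isCompact.prod hg.isCompact)
    ((isClosed_tsupport f).prod (isClosed_tsupport g)) fun p hp => ?_
  rw [Set.mem_prod, not_and_or] at hp
  rcases hp with hp | hp <;> simp [image_eq_zero_of_notMem_tsupport hp]

lemma add_mul_add_iteratedDeriv_two_mul_nonneg {f g : ℝ → ℝ} {a b x y : ℝ}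
    (hf : 0 ≤ f x) (hg : 0 ≤ g y) (hfa : 0 ≤ iteratedDeriv 2 f x + a * f x)
    (hgb : 0 ≤ iteratedDeriv 2 g y + b * g y) :
    0 ≤ (a + b) * (f x * g y) +
      (iteratedDeriv 2 (fun s => f s * g y) x + iteratedDeriv 2 (fun t => f x * g t) y) := by
  rw [iteratedDeriv_mul_const_field, iteratedDeriv_const_mul_field]
  calc
    0 ≤ (iteratedDeriv 2 f x + a * f x) * g y + f x * (iteratedDeriv 2 g y + b * g y) :=
      add_nonneg (mul_nonneg hfa hg) (mul_nonneg hf hgb)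
    _ = _ := by ring

/-- There exists a smooth, compactly supported, nonnegative, not identically zero
function `G : ℝ² → ℝ` such that `G + ΔG ≥ 0`, where
`ΔG p = ∂²G/∂x₁² p + ∂²G/∂x₂² p`. -/
theorem exists_smooth_compactly_supported_nonneg_add_laplacian_nonneg :
    ∃ G : ℝ × ℝ → ℝ,
      ContDiff ℝ (⊤ : ℕ∞) G ∧
      HasCompactSupport G ∧
      G ≠ 0 ∧
      (∀ p, 0 ≤ G p) ∧
      (∀ p : ℝ × ℝ,
        0 ≤ G p +
          (iteratedDeriv 2 (fun s => G (s, p.2)) p.1 +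
            iteratedDeriv 2 (fun t => G (p.1, t)) p.2)) := by
  obtain ⟨f, hf_smooth, hf_supp, hf_ne, hf_nonneg, hf_deriv⟩ :=
    exists_contDiff_hasCompactSupport_iteratedDeriv_two_add_mul_nonneg (c := 1 / 2) (by norm_num)
  obtain ⟨x₀, hx₀⟩ := Function.ne_iff.1 hf_ne
  refine ⟨fun p => f p.1 * f p.2, by fun_prop, hasCompactSupport_fst_mul_snd hf_supp hf_supp,
    Function.ne_iff.2 ⟨(x₀, x₀), mul_ne_zero hx₀ hx₀⟩,
    fun p => mul_nonneg (hf_nonneg _) (hf_nonneg _), fun p => ?_⟩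
  have h := add_mul_add_iteratedDeriv_two_mul_nonneg (hf_nonneg p.1) (hf_nonneg p.2)
    (hf_deriv p.1) (hf_deriv p.2)
  rwa [add_halves, one_mul] at h
end

section
/- Let b > 0, identify ℝ² with ℂ via z = x₁ + i x₂, and let a u := (−i∂₁ − A₁)u + i(−i∂₂ − A₂)u with A₁ = −b x₂/2, A₂ = b x₁/2. Then for every continuously differentiable function u : ℂ → ℂ (differentiable in the real sense), one has a u = 0 everywhere on ℂ if and only if the function z ↦ e^{b|z|²/4} u(z) is holomorphic (complex-differentiable at every point) on ℂ. -/
/-!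
Write `∂̄ = ∂₁ + i ∂₂`, so that holomorphic means `∂̄ f = 0`. Conjugating by an exponential shifts
`∂̄` by a zeroth-order term, `∂̄(e^φ u) = e^φ (∂̄u + (∂̄φ) u)`, and for `φ = b|z|²/4` the shift is
`∂̄φ = b z / 2`, which turns `∂̄` into `i a`. As `e^φ` never vanishes, `a u = 0` is the
Cauchy–Riemann equation for `e^φ u`.
-/

open Complex

/-- Partial derivative `∂₁` of `u : ℂ → ℂ`, identifying `ℂ` with `ℝ²`
via `z = x₁ + i x₂`. -/
noncomputable def pd1 (u : ℂ → ℂ) (z : ℂ) : ℂ :=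
  deriv (fun s : ℝ => u ((s : ℂ) + (z.im : ℂ) * Complex.I)) z.re

/-- Partial derivative `∂₂` of `u : ℂ → ℂ`. -/
noncomputable def pd2 (u : ℂ → ℂ) (z : ℂ) : ℂ :=
  deriv (fun t : ℝ => u ((z.re : ℂ) + (t : ℂ) * Complex.I)) z.im

/-- The annihilation operator `a u = (−i∂₁ − A₁)u + i(−i∂₂ − A₂)u`, where
`A₁ = −b x₂/2`, `A₂ = b x₁/2`, on `ℂ ≅ ℝ²`. -/
noncomputable def annih (b : ℝ) (u : ℂ → ℂ) (z : ℂ) : ℂ :=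
  ((-Complex.I) * pd1 u z - ((-b * z.im / 2 : ℝ) : ℂ) * u z) +
    Complex.I * ((-Complex.I) * pd2 u z - ((b * z.re / 2 : ℝ) : ℂ) * u z)

section CauchyRiemann

variable {E : Type*} [NormedAddCommGroup E] [NormedSpace ℂ E] {f : ℂ → E} {z : ℂ}

/-- The Cauchy–Riemann operator `∂₁ + i ∂₂`, through the real Fréchet derivative in the directions
`1` and `i`. It is twice the Wirtinger derivative `∂/∂z̄`. -/
noncomputable def dbar (f : ℂ → E) (z : ℂ) : E :=
  fderiv ℝ f z 1 + I • fderiv ℝ f z I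

theorem differentiableAt_complex_iff_dbar_eq_zero (hf : DifferentiableAt ℝ f z) :
    DifferentiableAt ℂ f z ↔ dbar f z = 0 := by
  have I_smul_dbar : I • dbar f z = I • fderiv ℝ f z 1 - fderiv ℝ f z I := by
    rw [dbar, smul_add, smul_smul, I_mul_I, neg_one_smul, sub_eq_add_neg]
  rw [differentiableAt_complex_iff_differentiableAt_real, and_iff_right hf,
    ← smul_eq_zero_iff_right I_ne_zero, I_smul_dbar, sub_eq_zero, eq_comm]

theorem dbar_cexp_smul {φ : ℂ → ℂ} (hφ : DifferentiableAt ℝ φ z) (hf : DifferentiableAt ℝ f z) :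
    dbar (fun w => exp (φ w) • f w) z = exp (φ z) • (dbar f z + dbar φ z • f z) := by
  simp only [dbar, (hφ.hasFDerivAt.cexp.fun_smul hf.hasFDerivAt).fderiv, add_apply, smul_apply,
    ContinuousLinearMap.smulRight_apply, smul_eq_mul]
  module

end CauchyRiemann

theorem hasFDerivAt_normSq (z : ℂ) :
    HasFDerivAt (fun w : ℂ => normSq w) ((2 : ℝ) • innerSL ℝ z) z := by
  simpa only [normSq_eq_norm_sq, two_smul] using (hasStrictFDerivAt_norm_sq z).hasFDerivAt

theorem hasFDerivAt_mul_normSq_div_four (b : ℝ) (z : ℂ) :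
    HasFDerivAt (fun w : ℂ => ((b * normSq w / 4 : ℝ) : ℂ))
      (ofRealCLM.comp ((b / 2) • innerSL ℝ z)) z := by
  have hreal : HasFDerivAt (fun w : ℂ => b * normSq w / 4) ((b / 2) • innerSL ℝ z) z := by
    convert! ((hasFDerivAt_normSq z).const_mul b).mul_const (4 : ℝ)⁻¹ using 1
    module
  exact ofRealCLM.hasFDerivAt.comp z hreal

theorem dbar_mul_normSq_div_four (b : ℝ) (z : ℂ) :
    dbar (fun w : ℂ => ((b * normSq w / 4 : ℝ) : ℂ)) z = b / 2 * z := by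
  have inner_one : innerSL ℝ z 1 = z.re := by simp [Complex.inner]
  have inner_I : innerSL ℝ z I = z.im := by simp [Complex.inner]
  rw [dbar, (hasFDerivAt_mul_normSq_div_four b z).fderiv]
  simp only [ContinuousLinearMap.comp_apply, smul_apply, inner_one, inner_I, ofRealCLM_apply,
    smul_eq_mul]
  push_cast
  linear_combination (b / 2 : ℂ) * re_add_im z

section Annihilation

variable {u : ℂ → ℂ} {z : ℂ}

theorem pd1_eq_fderiv (hu : DifferentiableAt ℝ u z) : pd1 u z = fderiv ℝ u z 1 := by
  have horizontal : HasDerivAt (fun s : ℝ => (s : ℂ) + z.im * I) 1 z.re :=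
    (ofRealCLM.hasDerivAt (x := z.re)).add_const _
  exact (hu.hasFDerivAt.comp_hasDerivAt_of_eq z.re horizontal (re_add_im z).symm).deriv

theorem pd2_eq_fderiv (hu : DifferentiableAt ℝ u z) : pd2 u z = fderiv ℝ u z I := by
  have vertical : HasDerivAt (fun t : ℝ => (z.re : ℂ) + t * I) I z.im := by
    simpa using ((ofRealCLM.hasDerivAt (x := z.im)).mul_const I).const_add (z.re : ℂ)
  exact (hu.hasFDerivAt.comp_hasDerivAt_of_eq z.im vertical (re_add_im z).symm).deriv

theorem I_mul_annih (b : ℝ) (hu : DifferentiableAt ℝ u z) :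
    I * annih b u z = dbar u z + b / 2 * z * u z := by
  rw [annih, pd1_eq_fderiv hu, pd2_eq_fderiv hu, dbar, smul_eq_mul]
  push_cast
  linear_combination (-fderiv ℝ u z 1 - I * fderiv ℝ u z I - b * z.re / 2 * u z) * I_sq
    + b / 2 * u z * re_add_im z

theorem dbar_cexp_normSq_mul (b : ℝ) (hu : DifferentiableAt ℝ u z) :
    dbar (fun w => exp ((b * normSq w / 4 : ℝ) : ℂ) * u w) z =
      exp ((b * normSq z / 4 : ℝ) : ℂ) * (I * annih b u z) := by
  have hφ := (hasFDerivAt_mul_normSq_div_four b z).differentiableAt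
  rw [I_mul_annih b hu, ← dbar_mul_normSq_div_four b z]
  exact dbar_cexp_smul hφ hu

theorem annih_eq_zero_iff_holomorphic_general (b : ℝ) (hu : DifferentiableAt ℝ u z) :
    annih b u z = 0 ↔
      DifferentiableAt ℂ (fun w => exp ((b * normSq w / 4 : ℝ) : ℂ) * u w) z := by
  have hφ := (hasFDerivAt_mul_normSq_div_four b z).differentiableAt
  rw [differentiableAt_complex_iff_dbar_eq_zero (hφ.cexp.fun_mul hu), dbar_cexp_normSq_mul b hu,
    mul_eq_zero_iff_left (exp_ne_zero _), mul_eq_zero_iff_left I_ne_zero]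

end Annihilation

/-- For a `C¹` function `u : ℂ → ℂ`, one has `a u = 0` everywhere on `ℂ`
if and only if `z ↦ e^{b|z|²/4} u(z)` is holomorphic on `ℂ`. -/
theorem annih_eq_zero_iff_holomorphic (b : ℝ) (hb : 0 < b)
    (u : ℂ → ℂ) (hu : ContDiff ℝ 1 u) :
    (∀ z : ℂ, annih b u z = 0) ↔
      Differentiable ℂ (fun z : ℂ => Complex.exp (((b * Complex.normSq z) / 4 : ℝ) : ℂ) * u z) := by
  exact forall_congr' fun z =>
    annih_eq_zero_iff_holomorphic_general b (hu.differentiable one_ne_zero z)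
end
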